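/- arXiv:2110.14948 — 2 statements merged into one kernel-verified Lean document; each statement's English description precedes it below -/
import Mathlib

section
/- Let U be a finite set with |U| = n and w : U → (0,∞) a positive weight function with total weight W = Σ_{a∈U} w(a). Fix a threshold φ > 0, let n_{≥φ} = |{ a ∈ U : w(a) ≥ φ }| and p = n_{≥φ}/n. Let a be a proportional sample and define b = 1/w(a) if w(a) ≥ φ, and b = 0 otherwise. Then E[b] = p·n/W and Var(b) ≤ p·n/(φ·W). -/
open MeasureTheory ProbabilityTheory

/-- If the outer measures of the fibres of `a` add up to one, the fibres are null measurable. -/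
theorem nullMeasurableSet_fiber_of_sum_eq_one
    {Ω U : Type*} [MeasurableSpace Ω] (μ : Measure Ω) [IsProbabilityMeasure μ]
    [Fintype U] (a : Ω → U) (h : ∑ x, μ {ω | a ω = x} = 1) (x : U) :
    NullMeasurableSet {ω | a ω = x} μ := by
  classical
  let T : U → Set Ω := fun y => toMeasurable μ {ω | a ω = y}
  let V : Set Ω := ⋃ y ∈ Finset.univ.erase x, T y
  have hT : ∀ y, {ω | a ω = y} ⊆ T y := fun y => subset_toMeasurable μ _
  have hV : MeasurableSet V :=
    Finset.measurableSet_biUnion _ fun y _ => measurableSet_toMeasurable μ _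
  have hcompl : ∀ ω, a ω ≠ x → ω ∈ V := fun ω hω =>
    Set.mem_biUnion (Finset.mem_erase.2 ⟨hω, Finset.mem_univ _⟩) (hT (a ω) rfl)
  have huniv : T x ∪ V = Set.univ := by
    refine Set.eq_univ_of_forall fun ω => ?_
    by_cases hω : a ω = x
    · exact Or.inl (hT x hω)
    · exact Or.inr (hcompl ω hω)
  have hle : μ (T x) + μ V ≤ 1 := by
    rw [← h, ← Finset.add_sum_erase _ _ (Finset.mem_univ x)]
    refine add_le_add (measure_toMeasurable _).le ((measure_biUnion_finset_le _ _).trans ?_)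
    exact Finset.sum_le_sum fun y _ => (measure_toMeasurable _).le
  have hinter : μ (T x ∩ V) = 0 := by
    rw [← measure_union_add_inter (T x) hV, huniv, measure_univ] at hle
    have := (ENNReal.add_le_add_iff_left ENNReal.one_ne_top).1 (hle.trans_eq (add_zero 1).symm)
    exact le_antisymm this zero_le
  have hdiff : μ (T x \ {ω | a ω = x}) = 0 :=
    measure_mono_null (t := T x ∩ V) (fun ω hω => ⟨hω.1, hcompl ω hω.2⟩) hinter
  refine (measurableSet_toMeasurable μ {ω | a ω = x}).nullMeasurableSet.congr ?_
  exact (ae_le_set.2 hdiff).antisymm (hT x).eventuallyLE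

theorem comp_eq_sum_indicator_fiber {Ω U : Type*} [Fintype U] (a : Ω → U) (f : U → ℝ) :
    (fun ω => f (a ω)) = fun ω => ∑ x, {ω | a ω = x}.indicator (fun _ => f x) ω := by
  classical
  funext ω
  simp [Set.indicator_apply]

theorem integrable_comp_of_nullMeasurableSet_fiber
    {Ω U : Type*} [MeasurableSpace Ω] (μ : Measure Ω) [IsFiniteMeasure μ]
    [Fintype U] (a : Ω → U) (ha : ∀ x, NullMeasurableSet {ω | a ω = x} μ) (f : U → ℝ) :
    Integrable (fun ω => f (a ω)) μ := by
  rw [comp_eq_sum_indicator_fiber]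
  exact integrable_finsetSum _ fun x _ => (integrable_const _).indicator₀ (ha x)

theorem integral_comp_eq_sum_fiber
    {Ω U : Type*} [MeasurableSpace Ω] (μ : Measure Ω) [IsFiniteMeasure μ]
    [Fintype U] (a : Ω → U) (ha : ∀ x, NullMeasurableSet {ω | a ω = x} μ) (f : U → ℝ) :
    ∫ ω, f (a ω) ∂μ = ∑ x, μ.real {ω | a ω = x} * f x := by
  rw [comp_eq_sum_indicator_fiber,
    integral_finsetSum _ fun x _ => (integrable_const _).indicator₀ (ha x)]
  refine Finset.sum_congr rfl fun x _ => ?_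
  rw [integral_indicator₀ (ha x), setIntegral_const, smul_eq_mul]

/-- (Truncated harmonic estimator, one sample.) Fix a threshold `φ > 0`,
let `p = |{a : w a ≥ φ}|/n`, draw one proportional sample `a`, and set `b = 1/w(a)` if
`w(a) ≥ φ` and `b = 0` otherwise.  Then `E[b] = p·n/W` and `Var(b) ≤ p·n/(φ·W)`. -/
theorem truncated_harmonic_estimator_moments
    {Ω U : Type*} [MeasurableSpace Ω] (μ : Measure Ω) [IsProbabilityMeasure μ]
    [Fintype U] [DecidableEq U]
    (n : ℕ) (hn : Fintype.card U = n)
    (w : U → ℝ) (hw : ∀ x, 0 < w x)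
    (W : ℝ) (hW : W = ∑ x, w x)
    (a : Ω → U)
    (hlaw : ∀ x : U, μ {ω | a ω = x} = ENNReal.ofReal (w x / W))
    (φ : ℝ) (hφ : 0 < φ)
    (p : ℝ) (hp : p = ((Finset.univ.filter (fun x => φ ≤ w x)).card : ℝ) / n)
    (b : Ω → ℝ)
    (hb : ∀ ω, b ω = if φ ≤ w (a ω) then (w (a ω))⁻¹ else 0) :
    ∫ ω, b ω ∂μ = p * n / W ∧ variance b μ ≤ p * n / (φ * W) := by
  have hΩ : Nonempty Ω := nonempty_of_isProbabilityMeasure μ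
  have hU : Nonempty U := hΩ.map a
  have hWpos : 0 < W := hW ▸ Finset.sum_pos (fun x _ => hw x) Finset.univ_nonempty
  have hn0 : (n : ℝ) ≠ 0 := by
    rw [← hn]
    exact_mod_cast Fintype.card_ne_zero
  have hpn : p * n = ∑ x, if φ ≤ w x then (1 : ℝ) else 0 := by
    rw [hp, div_mul_cancel₀ _ hn0, Finset.sum_boole]
  have hsum : ∑ x, μ {ω | a ω = x} = 1 := by
    simp_rw [hlaw]
    rw [← ENNReal.ofReal_sum_of_nonneg fun x _ => (div_pos (hw x) hWpos).le,
      ← Finset.sum_div, ← hW, div_self hWpos.ne', ENNReal.ofReal_one]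
  have ha := nullMeasurableSet_fiber_of_sum_eq_one μ a hsum
  have hreal : ∀ x, μ.real {ω | a ω = x} = w x / W := fun x => by
    rw [measureReal_def, hlaw, ENNReal.toReal_ofReal (div_pos (hw x) hWpos).le]
  let g : U → ℝ := fun x => if φ ≤ w x then (w x)⁻¹ else 0
  obtain rfl : b = fun ω => g (a ω) := funext hb
  refine ⟨?_, ?_⟩
  · rw [integral_comp_eq_sum_fiber μ a ha g, hpn, Finset.sum_div]
    refine Finset.sum_congr rfl fun x _ => ?_
    have := (hw x).ne'
    simp only [hreal, g]
    split_ifs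
    · field_simp
    · simp
  · refine (variance_le_expectation_sq
      (integrable_comp_of_nullMeasurableSet_fiber μ a ha g).aestronglyMeasurable).trans ?_
    refine (integral_comp_eq_sum_fiber μ a ha fun x => g x ^ 2).trans_le ?_
    rw [hpn, Finset.sum_div]
    refine Finset.sum_le_sum fun x _ => ?_
    have hx := hw x
    simp only [hreal, g]
    split_ifs with hφx
    · have : w x / W * (w x)⁻¹ ^ 2 = 1 / (w x * W) := by field_simp
      rw [this]
      gcongr
    · simp
end

section
/- Let X₁, …, X_m be i.i.d. random variables, each uniformly distributed on a finite set of size n ≥ 1, and let ℓ = |{X₁, …, X_m}| be the number of distinct elements among the m samples. Then Var(ℓ) ≤ m²/n. -/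
open MeasureTheory ProbabilityTheory

/-- In a finite measure space, a set whose outer measure and that of its complement add up to at
most the total mass is null-measurable. -/
theorem nullMeasurableSet_of_measure_add_compl_le {Ω : Type*} [MeasurableSpace Ω] {μ : Measure Ω}
    [IsFiniteMeasure μ] {s : Set Ω} (h : μ s + μ sᶜ ≤ μ Set.univ) : NullMeasurableSet s μ := by
  have hmeas : MeasurableSet (toMeasurable μ sᶜ)ᶜ := (measurableSet_toMeasurable μ sᶜ).compl
  have hsub : (toMeasurable μ sᶜ)ᶜ ⊆ s :=
    Set.compl_subset_comm.mp (subset_toMeasurable μ sᶜ)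
  refine hmeas.nullMeasurableSet.congr
    (ae_eq_of_subset_of_measure_ge hsub ?_ hmeas.nullMeasurableSet (measure_ne_top μ s))
  rw [measure_compl (measurableSet_toMeasurable μ sᶜ) (measure_ne_top μ _), measure_toMeasurable]
  exact ENNReal.le_sub_of_add_le_right (measure_ne_top μ _) h

/-- A map to a finite type is a.e.-measurable as soon as the outer measures of its fibres add up
to at most the total mass. -/
theorem aemeasurable_of_sum_measure_fiber_le {Ω β : Type*} [MeasurableSpace Ω] {μ : Measure Ω}
    [IsFiniteMeasure μ] [Fintype β] [MeasurableSpace β] [DiscreteMeasurableSpace β] {T : Ω → β}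
    (h : ∑ b, μ (T ⁻¹' {b}) ≤ μ Set.univ) : AEMeasurable T μ := by
  classical
  refine NullMeasurable.aemeasurable fun E _ => nullMeasurableSet_of_measure_add_compl_le ?_
  have hle (F : Set β) : μ (T ⁻¹' F) ≤ ∑ b with b ∈ F, μ (T ⁻¹' {b}) := by
    refine (measure_mono fun ω hω => ?_).trans (measure_biUnion_finset_le _ _)
    simpa using hω
  calc μ (T ⁻¹' E) + μ (T ⁻¹' E)ᶜ
      ≤ ∑ b with b ∈ E, μ (T ⁻¹' {b}) + ∑ b with b ∉ E, μ (T ⁻¹' {b}) :=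
        by
        simpa using add_le_add (hle E) (hle Eᶜ)
    _ = ∑ b, μ (T ⁻¹' {b}) := Finset.sum_filter_add_sum_filter_not _ _ _
    _ ≤ μ Set.univ := h

section Moments

variable (U : Type*) [Fintype U] [DecidableEq U]

/-- The average of `F` over the number of distinct values of all words of length `m`. -/
noncomputable def distinctMean (m : ℕ) (F : ℝ → ℝ) : ℝ :=
  ∑ v : Fin m → U, ((Fintype.card U : ℝ)⁻¹ ^ m) * F ((Finset.univ.image v).card : ℝ)

variable {U}

theorem sum_card_insert (F : ℝ → ℝ) (S : Finset U) :
    ∑ u, F ((insert u S).card : ℝ)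
      = S.card * F S.card + (Fintype.card U - S.card) * F (S.card + 1) := by
  have hin : ∑ u ∈ S, F ((insert u S).card : ℝ) = S.card * F S.card := by
    rw [Finset.sum_congr rfl fun u hu => by rw [Finset.insert_eq_of_mem hu]]
    simp
  have hout : ∑ u ∈ Sᶜ, F ((insert u S).card : ℝ)
      = (Fintype.card U - S.card) * F (S.card + 1) := by
    rw [Finset.sum_congr rfl fun u hu => by
      rw [Finset.card_insert_of_notMem (Finset.mem_compl.mp hu)]]
    simp [Finset.card_compl, Nat.cast_sub (Finset.card_le_univ S)]
  rw [← Finset.sum_add_sum_compl S, hin, hout]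

/-- One more sample is new with probability `1 - x / |U|`, where `x` is the current number of
distinct values. -/
theorem distinctMean_succ [Nonempty U] (m : ℕ) (F : ℝ → ℝ) :
    distinctMean U (m + 1) F = distinctMean U m fun x =>
      x / Fintype.card U * F x + (1 - x / Fintype.card U) * F (x + 1) := by
  have hn : (Fintype.card U : ℝ) ≠ 0 := by positivity
  unfold distinctMean
  rw [← (Fin.consEquiv fun _ : Fin (m + 1) => U).sum_comp, Fintype.sum_prod_type_right]
  refine Finset.sum_congr rfl fun v _ => ?_
  have himage (u : U) :
      Finset.univ.image (Fin.consEquiv (fun _ : Fin (m + 1) => U) (u, v))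
        = insert u (Finset.univ.image v) := by
    ext x
    simp [Fin.consEquiv, Fin.exists_fin_succ, eq_comm]
  simp only [himage]
  rw [← Finset.mul_sum, sum_card_insert, pow_succ]
  field_simp

theorem distinctMean_add (m : ℕ) (F G : ℝ → ℝ) :
    distinctMean U m (fun x => F x + G x) = distinctMean U m F + distinctMean U m G := by
  simp [distinctMean, mul_add, Finset.sum_add_distrib]

theorem distinctMean_const_mul (m : ℕ) (c : ℝ) (F : ℝ → ℝ) :
    distinctMean U m (fun x => c * F x) = c * distinctMean U m F := by
  simp [distinctMean, Finset.mul_sum, mul_left_comm]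

theorem distinctMean_one [Nonempty U] (m : ℕ) : distinctMean U m (fun _ => 1) = 1 := by
  simp [distinctMean]

theorem distinctMean_sq_nonneg (m : ℕ) : 0 ≤ distinctMean U m (fun x => x ^ 2) :=
  Finset.sum_nonneg fun _ _ => by positivity

theorem distinctMean_id_nonneg (m : ℕ) : 0 ≤ distinctMean U m (fun x => x) :=
  Finset.sum_nonneg fun _ _ => by positivity

theorem distinctMean_id_succ [Nonempty U] (m : ℕ) :
    distinctMean U (m + 1) (fun x => x)
      = (1 - 1 / Fintype.card U) * distinctMean U m (fun x => x) + 1 := by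
  have hpoly : (fun x : ℝ => x / Fintype.card U * x + (1 - x / Fintype.card U) * (x + 1))
      = fun x : ℝ => (1 - 1 / Fintype.card U) * x + 1 := by
    funext x; ring
  rw [distinctMean_succ, hpoly, distinctMean_add, distinctMean_const_mul, distinctMean_one]

theorem distinctMean_sq_succ [Nonempty U] (m : ℕ) :
    distinctMean U (m + 1) (fun x => x ^ 2)
      = (1 - 2 / Fintype.card U) * distinctMean U m (fun x => x ^ 2)
        + ((2 - 1 / Fintype.card U) * distinctMean U m (fun x => x) + 1) := by
  have hpoly : (fun x : ℝ => x / Fintype.card U * x ^ 2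
        + (1 - x / Fintype.card U) * (x + 1) ^ 2)
      = fun x : ℝ => (1 - 2 / Fintype.card U) * x ^ 2
        + ((2 - 1 / Fintype.card U) * x + 1) := by
    funext x; ring
  rw [distinctMean_succ, hpoly, distinctMean_add, distinctMean_const_mul, distinctMean_add,
    distinctMean_const_mul, distinctMean_one]

theorem distinctMean_id_le [Nonempty U] (m : ℕ) : distinctMean U m (fun x => x) ≤ m := by
  induction m with
  | zero => simp [distinctMean]
  | succ m ih =>
    have hnonneg : 0 ≤ 1 / (Fintype.card U : ℝ) * distinctMean U m (fun x => x) :=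
      mul_nonneg (by positivity) (distinctMean_id_nonneg m)
    rw [distinctMean_id_succ]
    push_cast
    linarith

theorem distinctMean_variance_le [Nonempty U] (m : ℕ) :
    distinctMean U m (fun x => x ^ 2) - distinctMean U m (fun x => x) ^ 2
      ≤ (m : ℝ) ^ 2 / Fintype.card U := by
  induction m with
  | zero => simp [distinctMean]
  | succ m ih =>
    rw [distinctMean_id_succ, distinctMean_sq_succ]
    have ha := distinctMean_id_le (U := U) m
    have hb := distinctMean_sq_nonneg (U := U) m
    set a := distinctMean U m (fun x => x)
    set b := distinctMean U m (fun x => x ^ 2)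
    have hn : (1 : ℝ) ≤ Fintype.card U := by exact_mod_cast Fintype.card_pos (α := U)
    rw [div_eq_mul_inv] at ih ⊢
    simp only [div_eq_mul_inv, one_mul]
    set c := (Fintype.card U : ℝ)⁻¹
    have hc0 : 0 ≤ c := by positivity
    have hc1 : c ≤ 1 := inv_le_one_of_one_le₀ hn
    have hvar : (1 - 2 * c) * b + ((2 - c) * a + 1) - ((1 - c) * a + 1) ^ 2
        = (1 - c) ^ 2 * (b - a ^ 2) + c * a - c ^ 2 * b := by ring
    have hcontract : (1 - c) ^ 2 * (b - a ^ 2) ≤ (m : ℝ) ^ 2 * c :=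
      calc (1 - c) ^ 2 * (b - a ^ 2) ≤ (1 - c) ^ 2 * ((m : ℝ) ^ 2 * c) := by gcongr
        _ ≤ 1 * ((m : ℝ) ^ 2 * c) := by
          gcongr
          exact pow_le_one₀ (by linarith) (by linarith)
        _ = (m : ℝ) ^ 2 * c := one_mul _
    have hca : c * a ≤ c * m := by gcongr
    have hcb : 0 ≤ c ^ 2 * b := by positivity
    have hcm : 0 ≤ c * m := by positivity
    rw [hvar]
    push_cast
    linarith

end Moments

/-- For `m` i.i.d. uniform samples from a set of size `n ≥ 1`, the number
`ℓ` of distinct sampled elements satisfies `Var(ℓ) ≤ m²/n`. -/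
theorem distinct_elements_variance_bound
    {Ω U : Type*} [MeasurableSpace Ω] (μ : Measure Ω) [IsProbabilityMeasure μ]
    [Fintype U] [DecidableEq U]
    (n : ℕ) (hn : 1 ≤ n) (hcard : Fintype.card U = n)
    (m : ℕ) (X : Fin m → Ω → U)
    (hlaw : ∀ v : Fin m → U,
      μ {ω | ∀ i, X i ω = v i} = ((n : ENNReal))⁻¹ ^ m)
    (ℓ : Ω → ℕ)
    (hℓ : ∀ ω, ℓ ω = (Finset.univ.image (fun i => X i ω)).card) :
    variance (fun ω => (ℓ ω : ℝ)) μ ≤ (m : ℝ) ^ 2 / n := by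
  subst hcard
  have : Nonempty U := Fintype.card_pos_iff.mp hn
  let : MeasurableSpace (Fin m → U) := ⊤
  have : DiscreteMeasurableSpace (Fin m → U) := ⟨fun _ => trivial⟩
  let T : Ω → Fin m → U := fun ω i => X i ω
  have hfiber (v : Fin m → U) : μ (T ⁻¹' {v}) = (Fintype.card U : ENNReal)⁻¹ ^ m := by
    rw [← hlaw v]
    congr 1
    ext ω
    simp [T, funext_iff]
  have hT : AEMeasurable T μ := by
    refine aemeasurable_of_sum_measure_fiber_le (le_of_eq ?_)
    simp only [hfiber, measure_univ]
    simp [← mul_pow, ENNReal.mul_inv_cancel]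
  have : IsProbabilityMeasure (μ.map T) := Measure.isProbabilityMeasure_map hT
  let N : (Fin m → U) → ℝ := fun v => ((Finset.univ.image v).card : ℝ)
  have hmean (F : ℝ → ℝ) : ∫ v, F (N v) ∂(μ.map T) = distinctMean U m F := by
    rw [integral_fintype Integrable.of_finite]
    simp [measureReal_def, Measure.map_apply_of_aemeasurable hT, hfiber, distinctMean, N]
  have hcomp : (fun ω => (ℓ ω : ℝ)) = N ∘ T := by
    funext ω
    simp [hℓ, N, T]
  rw [hcomp, ← variance_map AEMeasurable.of_discrete hT, variance_eq_sub MemLp.of_discrete]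
  have hsecond : ∫ v, (N ^ 2) v ∂(μ.map T) = distinctMean U m (fun x => x ^ 2) :=
    hmean fun x => x ^ 2
  rw [hsecond, hmean fun x => x]
  exact distinctMean_variance_le m
end
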